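/- arXiv:2210.09908 — 3 statements merged into one kernel-verified Lean document; each statement's English description precedes it below -/
import Mathlib

section
/- Let 0 < r < R and λ ∈ ℝ. Suppose u, v : ℝ² → ℂ are twice continuously differentiable on an open neighbourhood of the closed annulus {x ∈ ℝ² : r ≤ |x| ≤ R} and satisfy (−Δ − λ²)u = 0 and (−Δ − λ²)v = 0 there. Then the flux pairing is independent of the radius: ∫_{∂B(0,R)} ( v(x) ∂_ρ u(x) − u(x) ∂_ρ v(x) ) ds(x) = ∫_{∂B(0,r)} ( v(x) ∂_ρ u(x) − u(x) ∂_ρ v(x) ) ds(x). -/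
open MeasureTheory

noncomputable section

/-- The plane `ℝ²` with its Euclidean structure. -/
abbrev E2 := EuclideanSpace ℝ (Fin 2)

/-- The Euclidean Laplacian of a complex-valued function on `ℝ²`:
`Δu(x) = ∑ᵢ ∂²u/∂xᵢ²(x)`. -/
noncomputable def lap (u : E2 → ℂ) (x : E2) : ℂ :=
  ∑ i : Fin 2,
    fderiv ℝ (fun y => fderiv ℝ u y (EuclideanSpace.single i (1 : ℝ))) x
      (EuclideanSpace.single i (1 : ℝ))

/-- The radial derivative `∂_ρ u(x) = ⟨∇u(x), x/|x|⟩`. -/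
noncomputable def rderiv (u : E2 → ℂ) (x : E2) : ℂ :=
  fderiv ℝ u x (‖x‖⁻¹ • x)

/-!
The covector field `ω = v du − u dv` has divergence `v Δu − u Δv`, which vanishes when `u` and `v`
solve the same Helmholtz equation, and the flux pairing on `∂B(0, ρ)` is the outward flux of `ω`.
In polar coordinates `div ω = 0` reads `∂_ρ (ρ ω_ρ) + ∂_θ ω_θ = 0`, so the divergence theorem on
the rectangle `[r, R] × [0, 2π]`, where the two angular sides cancel by periodicity, shows that
`∫ ρ ω_ρ dθ` takes the same value at both radii. Arclength is compared with `ρ dθ` only up to a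
constant, by rotation invariance and scaling of `μH[1]`; this constant is the same for all radii.
-/

section SphereIntegral

open Metric Real

variable {E E' F : Type*} [NormedAddCommGroup E] [NormedSpace ℝ E] [MeasurableSpace E]
  [BorelSpace E] [NormedAddCommGroup E'] [NormedSpace ℝ E'] [MeasurableSpace E'] [BorelSpace E']
  [NormedAddCommGroup F]

lemma measurePreserving_hausdorffMeasure_restrict_sphere (e : E ≃ₗᵢ[ℝ] E') (d ρ : ℝ) :
    MeasurePreserving e (μH[d].restrict (sphere 0 ρ)) (μH[d].restrict (sphere 0 ρ)) := by
  have h := (e.toIsometryEquiv.measurePreserving_hausdorffMeasure d).restrict_preimage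
    (isClosed_sphere (x := (0 : E')) (ε := ρ)).measurableSet
  rwa [LinearIsometryEquiv.coe_toIsometryEquiv, e.preimage_sphere, map_zero] at h

open scoped Pointwise in
lemma hausdorffMeasure_real_sphere_zero {d ρ : ℝ} (hd : 0 ≤ d) (hρ : 0 < ρ) :
    (μH[d] : Measure E).real (sphere 0 ρ) = ρ ^ d * (μH[d] : Measure E).real (sphere 0 1) := by
  have hsphere : sphere (0 : E) ρ = ρ • sphere (0 : E) 1 := by
    rw [smul_sphere' hρ.ne', smul_zero, mul_one, Real.norm_of_nonneg hρ.le]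
  rw [hsphere, measureReal_def, Measure.hausdorffMeasure_smul₀ hd hρ.ne']
  simp [measureReal_def, ENNReal.smul_def, abs_of_pos hρ]

lemma hausdorffMeasure_one_sphere_lt_top (c : ℂ) (ρ : ℝ) : μH[1] (sphere c |ρ|) < ⊤ := by
  rw [← image_circleMap_Ioc]
  refine ((lipschitzWith_circleMap c ρ).hausdorffMeasure_image_le zero_le_one _).trans_lt ?_
  rw [hausdorffMeasure_real, Real.volume_Ioc]
  finiteness

lemma integrable_comp_rotation {ν : Measure ℝ} [IsFiniteMeasure ν] {μ : Measure ℂ}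
    [IsFiniteMeasure μ] {ρ : ℝ} (hsupp : ∀ᵐ z ∂μ, z ∈ sphere (0 : ℂ) ρ) {h : ℂ → F}
    (hh : ContinuousOn h (sphere 0 ρ)) :
    Integrable (fun p : ℝ × ℂ => h (rotation (Circle.exp p.1) p.2)) (ν.prod μ) := by
  have hsnd : ∀ᵐ p ∂ν.prod μ, p ∈ Prod.snd ⁻¹' sphere (0 : ℂ) ρ :=
    Measure.quasiMeasurePreserving_snd.ae hsupp
  have hmaps : Set.MapsTo (fun p : ℝ × ℂ => rotation (Circle.exp p.1) p.2)
      (Prod.snd ⁻¹' sphere 0 ρ) (sphere 0 ρ) := fun p hp => by simpa using hp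
  have hcont : Continuous fun p : ℝ × ℂ => rotation (Circle.exp p.1) p.2 := by
    simp only [rotation_apply]
    fun_prop
  obtain ⟨C, hC⟩ := (isCompact_sphere (0 : ℂ) ρ).exists_bound_of_continuousOn hh
  refine Integrable.of_bound ?_ C (hsnd.mono fun p hp => hC _ (hmaps hp))
  rw [← Measure.restrict_eq_self_of_ae_mem hsnd]
  exact (hh.comp hcont.continuousOn hmaps).aestronglyMeasurable
    (isClosed_sphere.preimage continuous_snd).measurableSet

variable [NormedSpace ℝ F]

lemma smul_integral_rotation_eq_circleAverage (h : ℂ → F) {ρ : ℝ} {z : ℂ}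
    (hz : z ∈ sphere (0 : ℂ) |ρ|) :
    (2 * π)⁻¹ • ∫ t in 0..2 * π, h (rotation (Circle.exp t) z) = circleAverage h 0 ρ := by
  rw [← image_circleMap_Ioc] at hz
  obtain ⟨s, -, rfl⟩ := hz
  rw [circleAverage_eq_integral_add s]
  have hmul (t : ℝ) :
      rotation (Circle.exp t) (circleMap 0 ρ s) = circleMap 0 ρ (t + s) := by
    rw [rotation_apply, Circle.coe_exp]
    simpa [circleMap_zero] using circleMap_zero_mul 1 ρ t s
  simp_rw [hmul]

variable [CompleteSpace F]

-- Rotating the variable does not change `∫ h ∂μ`; averaging over all angles and exchanging the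
-- integrals replaces the integrand by the constant `circleAverage h 0 ρ`.
lemma integral_eq_smul_circleAverage {μ : Measure ℂ} [IsFiniteMeasure μ]
    (hμ : ∀ a : Circle, MeasurePreserving (rotation a) μ μ) {ρ : ℝ}
    (hsupp : ∀ᵐ z ∂μ, z ∈ sphere (0 : ℂ) |ρ|) {h : ℂ → F} (hh : ContinuousOn h (sphere 0 |ρ|)) :
    ∫ z, h z ∂μ = μ.real Set.univ • circleAverage h 0 ρ := by
  let ν : Measure ℝ := volume.restrict (Set.Ioc 0 (2 * π))
  have hν : ν.real Set.univ = 2 * π := by simp [ν, pi_pos.le]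
  have hint : Integrable (fun p : ℝ × ℂ => h (rotation (Circle.exp p.1) p.2)) (ν.prod μ) :=
    integrable_comp_rotation hsupp hh
  have hrot (t : ℝ) : ∫ z, h (rotation (Circle.exp t) z) ∂μ = ∫ z, h z ∂μ :=
    (hμ _).integral_comp (rotation _).toHomeomorph.measurableEmbedding h
  calc ∫ z, h z ∂μ
      = (2 * π)⁻¹ • ∫ t, ∫ z, h (rotation (Circle.exp t) z) ∂μ ∂ν := by
        simp_rw [hrot, integral_const, hν]
        rw [inv_smul_smul₀ two_pi_pos.ne']
    _ = ∫ z, (2 * π)⁻¹ • ∫ t, h (rotation (Circle.exp t) z) ∂ν ∂μ := by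
        rw [integral_smul, integral_integral_swap hint]
    _ = ∫ _, circleAverage h 0 ρ ∂μ := by
        refine integral_congr_ae (hsupp.mono fun z hz => ?_)
        dsimp only
        rw [← smul_integral_rotation_eq_circleAverage h hz,
          intervalIntegral.integral_of_le two_pi_pos.le]
    _ = μ.real Set.univ • circleAverage h 0 ρ := integral_const _

lemma setIntegral_sphere_eq_smul_circleAverage {h : ℂ → F} {ρ : ℝ}
    (hh : ContinuousOn h (sphere 0 |ρ|)) :
    ∫ z in sphere (0 : ℂ) |ρ|, h z ∂μH[1]
      = (μH[1] : Measure ℂ).real (sphere 0 |ρ|) • circleAverage h 0 ρ := by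
  have : IsFiniteMeasure ((μH[1] : Measure ℂ).restrict (sphere 0 |ρ|)) :=
    isFiniteMeasure_restrict.2 (hausdorffMeasure_one_sphere_lt_top 0 ρ).ne
  rw [integral_eq_smul_circleAverage
    (fun a => measurePreserving_hausdorffMeasure_restrict_sphere (rotation a) 1 |ρ|)
    (ae_restrict_mem isClosed_sphere.measurableSet) hh, measureReal_restrict_apply_univ]

end SphereIntegral

section Polar

open Metric Real

variable {F : Type*} [NormedAddCommGroup F] [NormedSpace ℝ F]

/-- The unit vector `e_ρ` of the polar frame at angle `t`. -/
def radialUnit (t : ℝ) : E2 :=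
  cos t • EuclideanSpace.single 0 1 + sin t • EuclideanSpace.single 1 1

/-- The unit vector `e_θ` of the polar frame at angle `t`. -/
def angularUnit (t : ℝ) : E2 :=
  -sin t • EuclideanSpace.single 0 1 + cos t • EuclideanSpace.single 1 1

/-- The point of the plane with polar coordinates `p = (ρ, θ)`; any real `ρ` is allowed. -/
def polarPoint (p : ℝ × ℝ) : E2 := p.1 • radialUnit p.2

/-- The density `ρ ω_ρ` with respect to `dθ` of the flux of `ω` through the circle of radius `ρ`,
in polar coordinates `p = (ρ, θ)`. The factor `ρ` is absorbed by applying `ω` to the position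
vector rather than to the unit normal. -/
def radialFlux (ω : E2 → E2 →L[ℝ] F) (p : ℝ × ℝ) : F := ω (polarPoint p) (polarPoint p)

/-- The angular component `ω_θ` of `ω` in polar coordinates `p = (ρ, θ)`, the density with respect
to `dρ` of its flux through a ray. -/
def angularFlux (ω : E2 → E2 →L[ℝ] F) (p : ℝ × ℝ) : F := ω (polarPoint p) (angularUnit p.2)

/-- The divergence of a vector field on the plane. The field is encoded as an `F`-valued covector
field, so that its component along `e` at `x` is `ω x e`; this covers complex-valued fields. -/
def divergence (ω : E2 → E2 →L[ℝ] F) (x : E2) : F :=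
  ∑ i : Fin 2, fderiv ℝ ω x (EuclideanSpace.single i 1) (EuclideanSpace.single i 1)

lemma hasDerivAt_radialUnit (t : ℝ) : HasDerivAt radialUnit (angularUnit t) t :=
  ((hasDerivAt_cos t).smul_const _).add ((hasDerivAt_sin t).smul_const _)

lemma hasDerivAt_angularUnit (t : ℝ) : HasDerivAt angularUnit (-radialUnit t) t := by
  have h := ((hasDerivAt_sin t).neg.smul_const (EuclideanSpace.single (0 : Fin 2) (1 : ℝ))).add
    ((hasDerivAt_cos t).smul_const (EuclideanSpace.single (1 : Fin 2) (1 : ℝ)))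
  rwa [neg_smul, neg_smul, ← neg_add] at h

lemma norm_radialUnit (t : ℝ) : ‖radialUnit t‖ = 1 := by
  simp [radialUnit, EuclideanSpace.norm_eq]

lemma norm_polarPoint (p : ℝ × ℝ) : ‖polarPoint p‖ = |p.1| := by
  rw [polarPoint, norm_smul, norm_radialUnit, mul_one, Real.norm_eq_abs]

lemma norm_inv_smul_polarPoint {p : ℝ × ℝ} (hp : 0 < p.1) :
    ‖polarPoint p‖⁻¹ • polarPoint p = radialUnit p.2 := by
  rw [norm_polarPoint, abs_of_pos hp, polarPoint, inv_smul_smul₀ hp.ne']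

lemma hasFDerivAt_polarPoint (p : ℝ × ℝ) :
    HasFDerivAt polarPoint
      (p.1 • (ContinuousLinearMap.snd ℝ ℝ ℝ).smulRight (angularUnit p.2)
        + (ContinuousLinearMap.fst ℝ ℝ ℝ).smulRight (radialUnit p.2)) p :=
  hasFDerivAt_fst.smul ((hasDerivAt_radialUnit p.2).hasFDerivAt.comp p hasFDerivAt_snd)

lemma differentiable_polarPoint : Differentiable ℝ polarPoint :=
  fun p => (hasFDerivAt_polarPoint p).differentiableAt

lemma orthonormalBasisOneI_repr_circleMap (ρ t : ℝ) :
    Complex.orthonormalBasisOneI.repr (circleMap 0 ρ t) = polarPoint (ρ, t) := by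
  ext i
  fin_cases i <;>
    simp [polarPoint, radialUnit, Complex.orthonormalBasisOneI_repr_apply, circleMap_zero_re,
      circleMap_zero_im]

lemma setIntegral_sphere_eq_integral_polarPoint [CompleteSpace F] {h : E2 → F} {ρ : ℝ} (hρ : 0 < ρ)
    (hh : ContinuousOn h (sphere 0 ρ)) :
    ∫ x in sphere (0 : E2) ρ, h x ∂μH[1]
      = ((μH[1] : Measure ℂ).real (sphere 0 1) / (2 * π)) •
        ρ • ∫ t in 0..2 * π, h (polarPoint (ρ, t)) := by
  let φ := Complex.orthonormalBasisOneI.repr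
  have hφ : Set.MapsTo φ (sphere 0 |ρ|) (sphere 0 ρ) := fun z hz => by
    simpa [abs_of_pos hρ] using hz
  have hcomp := (measurePreserving_hausdorffMeasure_restrict_sphere φ 1 ρ).integral_comp
    φ.toHomeomorph.measurableEmbedding h
  have hcirc := setIntegral_sphere_eq_smul_circleAverage (hh.comp φ.continuous.continuousOn hφ)
  rw [abs_of_pos hρ, hausdorffMeasure_real_sphere_zero zero_le_one hρ, rpow_one] at hcirc
  simp only [Function.comp_apply] at hcirc
  rw [← hcomp, hcirc, circleAverage_def]
  simp only [φ, Function.comp_apply, orthonormalBasisOneI_repr_circleMap, smul_smul]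
  congr 1
  ring

lemma divergence_eq_polarFrame (ω : E2 → E2 →L[ℝ] F) (x : E2) (t : ℝ) :
    divergence ω x = fderiv ℝ ω x (radialUnit t) (radialUnit t)
      + fderiv ℝ ω x (angularUnit t) (angularUnit t) := by
  simp only [divergence, Fin.sum_univ_two, radialUnit, angularUnit, map_add, map_smul, add_apply,
    smul_apply]
  match_scalars <;> linarith [cos_sq_add_sin_sq t]

variable {ω : E2 → E2 →L[ℝ] F} {p : ℝ × ℝ}

lemma differentiableAt_radialFlux (hω : DifferentiableAt ℝ ω (polarPoint p)) :
    DifferentiableAt ℝ (radialFlux ω) p :=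
  (hω.comp p (differentiable_polarPoint p)).clm_apply (differentiable_polarPoint p)

lemma differentiableAt_angularFlux (hω : DifferentiableAt ℝ ω (polarPoint p)) :
    DifferentiableAt ℝ (angularFlux ω) p :=
  (hω.comp p (differentiable_polarPoint p)).clm_apply
    ((hasDerivAt_angularUnit p.2).differentiableAt.comp p differentiableAt_snd)

lemma fderiv_radialFlux_apply (hω : DifferentiableAt ℝ ω (polarPoint p)) :
    fderiv ℝ (radialFlux ω) p (1, 0) = ω (polarPoint p) (radialUnit p.2)
      + p.1 • fderiv ℝ ω (polarPoint p) (radialUnit p.2) (radialUnit p.2) := by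
  have hP := hasFDerivAt_polarPoint p
  have hF : HasFDerivAt (radialFlux ω) _ p := (hω.hasFDerivAt.comp p hP).clm_apply hP
  rw [hF.fderiv]
  simp [polarPoint]

lemma fderiv_angularFlux_apply (hω : DifferentiableAt ℝ ω (polarPoint p)) :
    fderiv ℝ (angularFlux ω) p (0, 1) = -ω (polarPoint p) (radialUnit p.2)
      + p.1 • fderiv ℝ ω (polarPoint p) (angularUnit p.2) (angularUnit p.2) := by
  have hP := hasFDerivAt_polarPoint p
  have hA := (hasDerivAt_angularUnit p.2).hasFDerivAt.comp p hasFDerivAt_snd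
  have hG : HasFDerivAt (angularFlux ω) _ p := (hω.hasFDerivAt.comp p hP).clm_apply hA
  rw [hG.fderiv]
  simp

lemma fderiv_radialFlux_add_fderiv_angularFlux (hω : DifferentiableAt ℝ ω (polarPoint p)) :
    fderiv ℝ (radialFlux ω) p (1, 0) + fderiv ℝ (angularFlux ω) p (0, 1)
      = p.1 • divergence ω (polarPoint p) := by
  rw [fderiv_radialFlux_apply hω, fderiv_angularFlux_apply hω, divergence_eq_polarFrame ω _ p.2]
  module

lemma angularFlux_two_pi (ω : E2 → E2 →L[ℝ] F) (ρ : ℝ) :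
    angularFlux ω (ρ, 2 * π) = angularFlux ω (ρ, 0) := by
  simp [angularFlux, polarPoint, radialUnit, angularUnit]

lemma integral_radialFlux_eq_of_divergence_eq_zero {r R : ℝ} (hr : 0 ≤ r) (hrR : r ≤ R)
    (hω : ∀ x, r ≤ ‖x‖ → ‖x‖ ≤ R → DifferentiableAt ℝ ω x)
    (hdiv : ∀ x, r ≤ ‖x‖ → ‖x‖ ≤ R → divergence ω x = 0) :
    ∫ t in 0..2 * π, radialFlux ω (R, t) = ∫ t in 0..2 * π, radialFlux ω (r, t) := by
  let S : Set (ℝ × ℝ) := Set.uIcc r R ×ˢ Set.uIcc 0 (2 * π)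
  have hIoo : Set.Ioo (min r R) (max r R) ×ˢ Set.Ioo (min 0 (2 * π)) (max 0 (2 * π)) ⊆ S :=
    Set.prod_mono Set.Ioo_subset_Icc_self Set.Ioo_subset_Icc_self
  have hnorm : ∀ p ∈ S, r ≤ ‖polarPoint p‖ ∧ ‖polarPoint p‖ ≤ R := fun p hp => by
    have hp₁ : p.1 ∈ Set.Icc r R := Set.uIcc_of_le hrR ▸ hp.1
    rwa [norm_polarPoint, abs_of_nonneg (hr.trans hp₁.1)]
  have hdiff : ∀ p ∈ S, DifferentiableAt ℝ ω (polarPoint p) := fun p hp =>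
    hω _ (hnorm p hp).1 (hnorm p hp).2
  have hzero : ∀ p ∈ S,
      fderiv ℝ (radialFlux ω) p (1, 0) + fderiv ℝ (angularFlux ω) p (0, 1) = 0 := fun p hp => by
    rw [fderiv_radialFlux_add_fderiv_angularFlux (hdiff p hp),
      hdiv _ (hnorm p hp).1 (hnorm p hp).2, smul_zero]
  have hgauss := integral2_divergence_prod_of_hasFDerivAt (radialFlux ω) (angularFlux ω)
    (fderiv ℝ (radialFlux ω)) (fderiv ℝ (angularFlux ω)) r 0 R (2 * π)
    (fun p hp => (differentiableAt_radialFlux (hdiff p hp)).continuousAt.continuousWithinAt)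
    (fun p hp => (differentiableAt_angularFlux (hdiff p hp)).continuousAt.continuousWithinAt)
    (fun p hp => (differentiableAt_radialFlux (hdiff p (hIoo hp))).hasFDerivAt)
    (fun p hp => (differentiableAt_angularFlux (hdiff p (hIoo hp))).hasFDerivAt)
    (integrableOn_zero.congr_fun (fun p hp => (hzero p hp).symm)
      (measurableSet_uIcc.prod measurableSet_uIcc))
  have hlhs : ∫ ρ in r..R, ∫ t in 0..2 * π,
      fderiv ℝ (radialFlux ω) (ρ, t) (1, 0) + fderiv ℝ (angularFlux ω) (ρ, t) (0, 1) = 0 :=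
    intervalIntegral.integral_zero_ae <| .of_forall fun ρ hρ =>
      intervalIntegral.integral_zero_ae <| .of_forall fun t ht =>
        hzero (ρ, t) ⟨Set.uIoc_subset_uIcc hρ, Set.uIoc_subset_uIcc ht⟩
  simp only [hlhs, angularFlux_two_pi, sub_self, zero_add] at hgauss
  exact sub_eq_zero.1 hgauss.symm

variable [CompleteSpace F]

lemma setIntegral_sphere_flux_eq_integral_radialFlux {ρ : ℝ} (hρ : 0 < ρ)
    (hω : ContinuousOn ω (sphere 0 ρ)) :
    ∫ x in sphere (0 : E2) ρ, ω x (‖x‖⁻¹ • x) ∂μH[1]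
      = ((μH[1] : Measure ℂ).real (sphere 0 1) / (2 * π)) •
        ∫ t in 0..2 * π, radialFlux ω (ρ, t) := by
  have hne : ∀ x ∈ sphere (0 : E2) ρ, ‖x‖ ≠ 0 := fun x hx => by
    rw [mem_sphere_zero_iff_norm.1 hx]
    exact hρ.ne'
  have hnormal : ContinuousOn (fun x : E2 => ‖x‖⁻¹ • x) (sphere 0 ρ) :=
    (continuousOn_id.norm.inv₀ hne).smul continuousOn_id
  rw [setIntegral_sphere_eq_integral_polarPoint hρ (hω.clm_apply hnormal),
    ← intervalIntegral.integral_smul]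
  congr! 3 with t
  rw [norm_inv_smul_polarPoint (p := (ρ, t)) hρ, ← map_smul]
  rfl

theorem setIntegral_sphere_flux_eq_of_divergence_eq_zero {r R : ℝ} (hr : 0 < r) (hrR : r ≤ R)
    (hω : ∀ x, r ≤ ‖x‖ → ‖x‖ ≤ R → DifferentiableAt ℝ ω x)
    (hdiv : ∀ x, r ≤ ‖x‖ → ‖x‖ ≤ R → divergence ω x = 0) :
    ∫ x in sphere (0 : E2) R, ω x (‖x‖⁻¹ • x) ∂μH[1]
      = ∫ x in sphere (0 : E2) r, ω x (‖x‖⁻¹ • x) ∂μH[1] := by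
  have hcont {ρ : ℝ} (hrρ : r ≤ ρ) (hρR : ρ ≤ R) : ContinuousOn ω (sphere 0 ρ) := fun x hx => by
    rw [← mem_sphere_zero_iff_norm.1 hx] at hrρ hρR
    exact (hω x hrρ hρR).continuousAt.continuousWithinAt
  rw [setIntegral_sphere_flux_eq_integral_radialFlux (hr.trans_le hrR) (hcont hrR le_rfl),
    setIntegral_sphere_flux_eq_integral_radialFlux hr (hcont le_rfl hrR),
    integral_radialFlux_eq_of_divergence_eq_zero hr.le hrR hω hdiv]

end Polar

/-- The covector field `v du − u dv` of Green's second identity, whose flux through a circle is the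
flux pairing of `u` and `v`. -/
def greenForm (u v : E2 → ℂ) (x : E2) : E2 →L[ℝ] ℂ := v x • fderiv ℝ u x - u x • fderiv ℝ v x

lemma differentiableAt_greenForm {u v : E2 → ℂ} {x : E2}
    (hu : DifferentiableAt ℝ u x) (hv : DifferentiableAt ℝ v x)
    (hu' : DifferentiableAt ℝ (fderiv ℝ u) x) (hv' : DifferentiableAt ℝ (fderiv ℝ v) x) :
    DifferentiableAt ℝ (greenForm u v) x :=
  (hv.smul hu').sub (hu.smul hv')

lemma divergence_greenForm {u v : E2 → ℂ} {x : E2}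
    (hu : DifferentiableAt ℝ u x) (hv : DifferentiableAt ℝ v x)
    (hu' : DifferentiableAt ℝ (fderiv ℝ u) x) (hv' : DifferentiableAt ℝ (fderiv ℝ v) x) :
    divergence (greenForm u v) x = v x * lap u x - u x * lap v x := by
  have hlap {w : E2 → ℂ} (hw : DifferentiableAt ℝ (fderiv ℝ w) x) :
      lap w x = divergence (fderiv ℝ w) x := by
    simp [lap, divergence, fderiv_clm_apply hw]
  have hω : HasFDerivAt (greenForm u v) _ x :=
    (hv.hasFDerivAt.smul hu'.hasFDerivAt).sub (hu.hasFDerivAt.smul hv'.hasFDerivAt)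
  rw [hlap hu', hlap hv', divergence, hω.fderiv]
  simp only [divergence, Fin.sum_univ_two, sub_apply, add_apply, smul_apply,
    ContinuousLinearMap.smulRight_apply, smul_eq_mul]
  ring

theorem flux_pairing_radius_independent_general {r R : ℝ} (hr : 0 < r) (hrR : r ≤ R)
    {u v : E2 → ℂ} {U : Set E2} (hU : IsOpen U) (hUsub : {x : E2 | r ≤ ‖x‖ ∧ ‖x‖ ≤ R} ⊆ U)
    (hu : DifferentiableOn ℝ u U) (hv : DifferentiableOn ℝ v U)
    (hu' : DifferentiableOn ℝ (fderiv ℝ u) U) (hv' : DifferentiableOn ℝ (fderiv ℝ v) U)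
    (huv : ∀ x ∈ U, v x * lap u x = u x * lap v x) :
    ∫ x in Metric.sphere (0 : E2) R, (v x * rderiv u x - u x * rderiv v x) ∂μH[1]
      = ∫ x in Metric.sphere (0 : E2) r, (v x * rderiv u x - u x * rderiv v x) ∂μH[1] := by
  have hUnhds (x : E2) (hrx : r ≤ ‖x‖) (hxR : ‖x‖ ≤ R) : U ∈ nhds x :=
    hU.mem_nhds (hUsub ⟨hrx, hxR⟩)
  have hdiff (x : E2) (hx : U ∈ nhds x) : DifferentiableAt ℝ (greenForm u v) x :=
    differentiableAt_greenForm (hu.differentiableAt hx) (hv.differentiableAt hx)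
      (hu'.differentiableAt hx) (hv'.differentiableAt hx)
  have hdiv (x : E2) (hx : U ∈ nhds x) : divergence (greenForm u v) x = 0 := by
    rw [divergence_greenForm (hu.differentiableAt hx) (hv.differentiableAt hx)
      (hu'.differentiableAt hx) (hv'.differentiableAt hx), huv x (mem_of_mem_nhds hx), sub_self]
  exact setIntegral_sphere_flux_eq_of_divergence_eq_zero hr hrR
    (fun x hrx hxR => hdiff x (hUnhds x hrx hxR)) (fun x hrx hxR => hdiv x (hUnhds x hrx hxR))

/-- If `u, v` are `C²` solutions of the Helmholtz equation `(−Δ − λ²)w = 0`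
on a neighbourhood of the closed annulus `{r ≤ |x| ≤ R}`, then the flux pairing
`∫_{∂B(0,ρ)} (v ∂_ρ u − u ∂_ρ v) ds` is the same for `ρ = r` and `ρ = R`. -/
theorem flux_pairing_radius_independent
    (r R : ℝ) (hr : 0 < r) (hrR : r < R) (lam : ℝ)
    (u v : E2 → ℂ) (U : Set E2) (hU : IsOpen U)
    (hUsub : {x : E2 | r ≤ ‖x‖ ∧ ‖x‖ ≤ R} ⊆ U)
    (hu : ContDiffOn ℝ 2 u U) (hv : ContDiffOn ℝ 2 v U)
    (hueq : ∀ x ∈ U, -lap u x - (lam : ℂ) ^ 2 * u x = 0)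
    (hveq : ∀ x ∈ U, -lap v x - (lam : ℂ) ^ 2 * v x = 0) :
    (∫ x in Metric.sphere (0 : E2) R, (v x * rderiv u x - u x * rderiv v x) ∂μH[1])
      = ∫ x in Metric.sphere (0 : E2) r, (v x * rderiv u x - u x * rderiv v x) ∂μH[1] := by
  exact flux_pairing_radius_independent_general hr hrR.le hU hUsub
    (hu.differentiableOn two_ne_zero) (hv.differentiableOn two_ne_zero)
    ((hu.fderiv_of_isOpen hU one_add_one_eq_two.le).differentiableOn one_ne_zero)
    ((hv.fderiv_of_isOpen hU one_add_one_eq_two.le).differentiableOn one_ne_zero)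
    fun x hx => by linear_combination u x * hveq x hx - v x * hueq x hx

end
end

section
/- For n ∈ ℤ and x ∈ ℝ, define the Bessel function J_n(x) := (1/(2π)) ∫_{−π}^{π} e^{i(x sin τ − n τ)} dτ. Then for all x, φ ∈ ℝ, the Jacobi–Anger expansion holds: e^{i x cos φ} = Σ_{n ∈ ℤ} i^n J_n(x) e^{i n φ}, where the series converges absolutely; equivalently, e^{i x cos φ} = Σ_{n=0}^{∞} δ_n · 2 · i^n J_n(x) cos(n φ) with δ_0 = 1/2 and δ_n = 1 for n ≥ 1. -/
open MeasureTheory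

noncomputable section

/-- The Bessel function of integer order:
`J_n(x) := (1/(2π)) ∫_{−π}^{π} e^{i(x sin τ − n τ)} dτ`. -/
noncomputable def besselJ (n : ℤ) (x : ℝ) : ℂ :=
  (1 / (2 * Real.pi)) *
    ∫ τ in (-Real.pi)..Real.pi,
      Complex.exp (Complex.I * ((x * Real.sin τ : ℝ) - (n * τ : ℝ)))

/-!
The function `θ ↦ e^{ix sin θ}` on the circle has Fourier coefficients `J_n(x)`. Replacing `θ` by
`θ + π / 2` multiplies the `n`-th coefficient by `iⁿ`, so `iⁿ J_n(x)` are the Fourier coefficients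
of `θ ↦ e^{ix cos θ}`. The Fourier series of a differentiable function `f` with square-integrable
derivative converges absolutely: up to a constant, `|c_n(f)|` is `|n|⁻¹ |c_n(f')|`, a product of
two square-summable sequences by Parseval's identity for `f'`. This gives the expansion over `ℤ`.
Since cosine is even, so are the coefficients, and adding the terms at `n` and `-n` gives the
cosine series.
-/

section

open AddCircle Complex
open scoped Real

section FourierCoefficients

variable {T : ℝ} [hT : Fact (0 < T)]

lemma intervalIntegrable_of_integrable_haarAddCircle {E : Type*} [NormedAddCommGroup E]
    {f : AddCircle T → E} (hf : Integrable f haarAddCircle) (a : ℝ) :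
    IntervalIntegrable (fun t : ℝ => f t) volume a (a + T) := by
  have hf_volume : Integrable f := by
    rw [volume_eq_smul_haarAddCircle]
    exact hf.smul_measure ENNReal.ofReal_ne_top
  rw [intervalIntegrable_iff_integrableOn_Ioc_of_le (le_add_of_nonneg_right hT.out.le)]
  exact (AddCircle.measurePreserving_mk T a).integrable_comp_of_integrable hf_volume

section VectorValued

variable {E : Type*} [NormedAddCommGroup E] [NormedSpace ℂ E]

lemma fourierCoeff_comp_neg (f : AddCircle T → E) (n : ℤ) :
    fourierCoeff (fun t => f (-t)) n = fourierCoeff f (-n) := by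
  rw [fourierCoeff, fourierCoeff, ← integral_neg_eq_self _ haarAddCircle]
  simp only [fourier_apply, neg_neg, neg_smul, smul_neg]

lemma fourierCoeff_comp_add_right (f : AddCircle T → E) (a : AddCircle T) (n : ℤ) :
    fourierCoeff (fun t => f (t + a)) n = fourier n a • fourierCoeff f n := by
  have kernel_translate (t : AddCircle T) :
      fourier (-n) t • f (t + a) = fourier n a • fourier (-n) (t + a) • f (t + a) := by
    simp only [fourier_apply, smul_smul, ← Circle.coe_mul, ← toCircle_add]
    congr 3
    rw [smul_add, neg_smul n a, add_comm, neg_add_cancel_right]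
  simp only [fourierCoeff, kernel_translate, integral_smul]
  rw [integral_add_right_eq_self (fun t => fourier (-n) t • f t) a]

lemma fourierCoeff_of_hasDerivAt [CompleteSpace E] {f f' : AddCircle T → E}
    (hf : ∀ t : ℝ, HasDerivAt (fun s : ℝ => f s) (f' t) t)
    (hf' : Integrable f' haarAddCircle) (n : ℤ) :
    fourierCoeff f' n = (2 * π * I * n / T : ℂ) • fourierCoeff f n := by
  have by_parts := intervalIntegral.integral_smul_deriv_eq_deriv_smul
    (fun t _ => hasDerivAt_fourier_neg T n t) (fun t _ => hf t)
    (Continuous.intervalIntegrable (by fun_prop) 0 (0 + T))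
    (intervalIntegrable_of_integrable_haarAddCircle hf' 0)
  have boundary_eq : fourier (-n) ((0 + T : ℝ) : AddCircle T) • f ((0 + T : ℝ) : AddCircle T) =
      fourier (-n) ((0 : ℝ) : AddCircle T) • f ((0 : ℝ) : AddCircle T) := by
    rw [coe_add_period]
  rw [fourierCoeff_eq_intervalIntegral f' n 0, fourierCoeff_eq_intervalIntegral f n 0, by_parts,
    boundary_eq, sub_self, zero_sub, smul_comm _ (1 / T), ← intervalIntegral.integral_smul,
    ← intervalIntegral.integral_neg]
  simp only [← neg_smul, smul_smul, neg_mul, neg_div, neg_neg]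

lemma norm_fourierCoeff_of_hasDerivAt [CompleteSpace E] {f f' : AddCircle T → E}
    (hf : ∀ t : ℝ, HasDerivAt (fun s : ℝ => f s) (f' t) t)
    (hf' : Integrable f' haarAddCircle) {n : ℤ} (hn : n ≠ 0) :
    ‖fourierCoeff f n‖ = T / (2 * π * |(n : ℝ)|) * ‖fourierCoeff f' n‖ := by
  have norm_multiplier : ‖(2 * π * I * n / T : ℂ)‖ = 2 * π * |(n : ℝ)| / T := by
    simp [abs_of_pos Real.pi_pos, abs_of_pos hT.out]
  have abs_n_ne_zero : |(n : ℝ)| ≠ 0 := abs_ne_zero.mpr (Int.cast_ne_zero.mpr hn)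
  have hT_ne_zero : T ≠ 0 := hT.out.ne'
  rw [fourierCoeff_of_hasDerivAt hf hf', norm_smul, norm_multiplier]
  field_simp

end VectorValued

lemma summable_sq_norm_fourierCoeff {f : AddCircle T → ℂ} (hf : MemLp f 2 haarAddCircle) :
    Summable fun n : ℤ => ‖fourierCoeff f n‖ ^ 2 := by
  rw [← fourierCoeff_congr_ae hf.coeFn_toLp]
  exact (hasSum_sq_fourierCoeff hf.toLp).summable

lemma summable_fourierCoeff_of_hasDerivAt {f f' : AddCircle T → ℂ}
    (hf : ∀ t : ℝ, HasDerivAt (fun s : ℝ => f s) (f' t) t) (hf' : MemLp f' 2 haarAddCircle) :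
    Summable (fourierCoeff f) := by
  have summable_sq_multiplier : Summable fun n : ℤ => (T / (2 * π * |(n : ℝ)|)) ^ 2 := by
    refine ((Real.summable_one_div_int_pow.mpr one_lt_two).mul_left
      ((T / (2 * π)) ^ 2)).congr fun n => ?_
    rw [div_mul_eq_div_mul_one_div T (2 * π), mul_pow, one_div_pow, sq_abs]
  refine (summable_sq_multiplier.add
    (summable_sq_norm_fourierCoeff hf')).of_norm_bounded_eventually ?_
  filter_upwards [(Set.finite_singleton (0 : ℤ)).eventually_cofinite_notMem] with n hn
  have multiplier_nonneg : 0 ≤ T / (2 * π * |(n : ℝ)|) := div_nonneg hT.out.le (by positivity)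
  rw [norm_fourierCoeff_of_hasDerivAt hf (hf'.integrable one_le_two) hn]
  linarith [two_mul_le_add_sq (T / (2 * π * |(n : ℝ)|)) ‖fourierCoeff f' n‖,
    mul_nonneg multiplier_nonneg (norm_nonneg (fourierCoeff f' n))]

lemma hasSum_fourier_series_of_hasDerivAt {f f' : AddCircle T → ℂ}
    (hf : ∀ t : ℝ, HasDerivAt (fun s : ℝ => f s) (f' t) t) (hf' : MemLp f' 2 haarAddCircle)
    (t : AddCircle T) :
    HasSum (fun n : ℤ => fourierCoeff f n • fourier n t) (f t) := by
  have continuous_f : Continuous f :=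
    (QuotientAddGroup.isQuotientMap_mk _).continuous_iff.mpr
      (continuous_iff_continuousAt.mpr fun s => (hf s).continuousAt)
  exact has_pointwise_sum_fourier_series_of_summable (f := ⟨f, continuous_f⟩)
    (summable_fourierCoeff_of_hasDerivAt hf hf') t

end FourierCoefficients

lemma hasSum_nat_mul_cos_of_hasSum_int_mul_exp {c : ℤ → ℂ} (hc : ∀ n, c (-n) = c n) {z s : ℂ}
    (h : HasSum (fun n : ℤ => c n * exp (I * (n * z))) s) :
    HasSum (fun n : ℕ => (if n = 0 then (1 / 2 : ℂ) else 1) * 2 * c n * cos (n * z)) s := by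
  have h_paired := h.nat_add_neg.sub (hasSum_ite_eq (0 : ℕ) (c 0))
  convert! h_paired using 1
  · funext n
    rcases eq_or_ne n 0 with rfl | hn
    · simp
    · simp only [hn, if_false, hc, cos]
      push_cast
      ring_nf
  · simp

section PlaneWave

local instance fact_two_pi_pos : Fact (0 < 2 * π) := ⟨Real.two_pi_pos⟩

lemma fourier_two_pi_coe_apply (n : ℤ) (t : ℝ) :
    fourier n (t : AddCircle (2 * π)) = exp (I * (n * t)) := by
  rw [fourier_coe_apply]
  congr 1
  push_cast
  field_simp

/-- The plane wave `e^{ix cos θ}` on the circle, the function expanded by the Jacobi–Anger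
formula. The argument `θ` is fed to `Real.Angle.cos` through the definitional equality of
`Real.Angle` with `AddCircle (2 * π)`. -/
def planeWave (x : ℝ) (θ : AddCircle (2 * π)) : ℂ :=
  exp (I * (x * Real.Angle.cos θ))

lemma planeWave_coe (x t : ℝ) :
    planeWave x t = exp (I * (x * Real.cos t)) :=
  rfl

lemma planeWave_neg (x : ℝ) (θ : AddCircle (2 * π)) :
    planeWave x (-θ) = planeWave x θ :=
  congrArg (fun r : ℝ => exp (I * (x * r))) (Real.Angle.cos_neg θ)

lemma besselJ_eq_fourierCoeff_planeWave_translate (n : ℤ) (x : ℝ) :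
    besselJ n x = fourierCoeff
      (fun θ => planeWave x (θ + ((-(π / 2) : ℝ) : AddCircle (2 * π)))) n := by
  rw [fourierCoeff_eq_intervalIntegral _ n (-π), real_smul, besselJ,
    show -π + 2 * π = π by ring]
  push_cast
  congr 2
  funext t
  rw [← AddCircle.coe_add, planeWave_coe, fourier_two_pi_coe_apply, smul_eq_mul, ← exp_add,
    ← sub_eq_add_neg, Real.cos_sub_pi_div_two]
  push_cast
  ring_nf

lemma fourierCoeff_planeWave (n : ℤ) (x : ℝ) :
    fourierCoeff (planeWave x) n = I ^ n * besselJ n x := by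
  have fourier_neg_pi_div_two :
      fourier n ((-(π / 2) : ℝ) : AddCircle (2 * π)) = (I ^ n)⁻¹ := by
    rw [fourier_two_pi_coe_apply, mul_left_comm, exp_int_mul, ← inv_zpow]
    push_cast
    rw [mul_neg, exp_neg, mul_comm, exp_pi_div_two_mul_I]
  rw [besselJ_eq_fourierCoeff_planeWave_translate, fourierCoeff_comp_add_right,
    fourier_neg_pi_div_two, smul_eq_mul, mul_inv_cancel_left₀ (zpow_ne_zero n I_ne_zero)]

lemma I_zpow_neg_mul_besselJ_neg (n : ℤ) (x : ℝ) :
    I ^ (-n) * besselJ (-n) x = I ^ n * besselJ n x := by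
  rw [← fourierCoeff_planeWave, ← fourierCoeff_planeWave, ← fourierCoeff_comp_neg]
  simp only [planeWave_neg]

lemma continuous_planeWave (x : ℝ) : Continuous (planeWave x) := by
  have continuous_cos : Continuous fun θ : AddCircle (2 * π) => Real.Angle.cos θ :=
    Real.Angle.continuous_cos
  unfold planeWave
  fun_prop

lemma hasDerivAt_planeWave (x t : ℝ) :
    HasDerivAt (fun s : ℝ => planeWave x s)
      (planeWave x t * (I * (x * -Real.Angle.sin t))) t := by
  have := (((Real.hasDerivAt_cos t).ofReal_comp.const_mul (x : ℂ)).const_mul I).cexp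
  simpa [planeWave_coe] using this

lemma hasSum_fourier_series_planeWave (x : ℝ) (θ : AddCircle (2 * π)) :
    HasSum (fun n : ℤ => I ^ n * besselJ n x * fourier n θ) (planeWave x θ) := by
  have continuous_sin : Continuous fun θ : AddCircle (2 * π) => Real.Angle.sin θ :=
    Real.Angle.continuous_sin
  have continuous_deriv : Continuous fun θ : AddCircle (2 * π) =>
      planeWave x θ * (I * (x * -Real.Angle.sin θ)) := by
    have := continuous_planeWave x
    fun_prop
  have := hasSum_fourier_series_of_hasDerivAt (hasDerivAt_planeWave x)
    (continuous_deriv.memLp_of_hasCompactSupport (.of_compactSpace _)) θ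
  simpa only [fourierCoeff_planeWave, smul_eq_mul] using this

end PlaneWave

end

/-- The Jacobi–Anger expansion: `e^{ix cos φ} = Σ_{n∈ℤ} iⁿ J_n(x) e^{inφ}` (the series
converging absolutely, which in `ℂ` is expressed by unconditional summability `HasSum`),
and equivalently `e^{ix cos φ} = Σ_{n≥0} δ_n 2 iⁿ J_n(x) cos(nφ)` with `δ_0 = 1/2`,
`δ_n = 1` for `n ≥ 1`. -/
theorem jacobi_anger (x φ : ℝ) :
    HasSum (fun n : ℤ =>
        Complex.I ^ n * besselJ n x * Complex.exp (Complex.I * ((n : ℝ) * φ : ℝ)))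
      (Complex.exp (Complex.I * ((x * Real.cos φ : ℝ) : ℂ))) ∧
    HasSum (fun n : ℕ =>
        (if n = 0 then (1 / 2 : ℂ) else 1) * 2 * Complex.I ^ (n : ℤ) * besselJ n x *
          ((Real.cos ((n : ℝ) * φ) : ℝ) : ℂ))
      (Complex.exp (Complex.I * ((x * Real.cos φ : ℝ) : ℂ))) := by
  have exponential_series : HasSum
      (fun n : ℤ => Complex.I ^ n * besselJ n x * Complex.exp (Complex.I * (n * φ)))
      (Complex.exp (Complex.I * (x * Real.cos φ))) := by
    simpa only [fourier_two_pi_coe_apply, planeWave_coe] using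
      hasSum_fourier_series_planeWave x φ
  have cosine_series := hasSum_nat_mul_cos_of_hasSum_int_mul_exp
    (fun n => I_zpow_neg_mul_besselJ_neg n x) exponential_series
  push_cast at exponential_series cosine_series ⊢
  exact ⟨exponential_series, by simpa only [mul_assoc] using cosine_series⟩

end
end

section
/- For n ∈ ℤ and x ∈ ℝ, define the Bessel function J_n(x) := (1/(2π)) ∫_{−π}^{π} e^{i(x sin τ − n τ)} dτ. Then for each fixed n ≥ 0, as x → +∞, J_n(x) = √(2/(πx)) cos(x − nπ/2 − π/4) + O(x^{−3/2}). -/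
open MeasureTheory

noncomputable section

/-!
Folding the integral at `0` and then at `π / 2` gives
`J_n(x) = (2 / π) Re (e^{-i n π / 2} ∫_0^{π/2} e^{i x cos t} cos (n t) dt)`, whose only stationary
point is the endpoint `t = 0`. The substitution `y = sin (t / 2)` makes the phase exactly quadratic:
the inner integral becomes `e^{i x} ∫_0^{1/√2} e^{-2 i x y²} φ(y) dy` with `φ` analytic and even.

For `Re b ≥ 0`, writing `φ(y) = φ(0) + y u(y)` and integrating by parts, `∫_0^a e^{-b y²} φ(y) dy`
equals `φ(0) √(π / b) / 2` plus terms of order `1 / b` located at the endpoints, up to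
`O(|b|^{-3/2})`. Evenness of `φ` kills the term at `0`. The term at `a = 1/√2` is not small, but
after the rotation its real part is a multiple of `sin (n π / 2) cos (n π / 2) = 0`.
-/

section GaussianIntegral

open Filter Topology Set Complex

lemma hasDerivAt_cexp_neg_mul_sq (b : ℂ) (y : ℝ) :
    HasDerivAt (fun t : ℝ => cexp (-b * t ^ 2)) (-(2 * b * y) * cexp (-b * y ^ 2)) y :=
  ((((hasDerivAt_id (y : ℂ)).fun_pow 2).const_mul (-b)).cexp.comp_ofReal).congr_deriv (by
    simp only [id_eq, Nat.cast_ofNat, Nat.add_one_sub_one, pow_one, mul_one]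
    ring)

lemma norm_cexp_neg_mul_sq_le_one {b : ℂ} (hb : 0 ≤ b.re) (y : ℝ) :
    ‖cexp (-b * y ^ 2)‖ ≤ 1 := by
  rw [norm_cexp_neg_mul_sq, Real.exp_le_one_iff]
  nlinarith [mul_nonneg hb (sq_nonneg y)]

/-- The primitive of `e^{-b y²} (1 - 3 / (4 b² y⁴))` obtained by integrating `e^{-b y²}` by parts
twice, as the first two terms of its expansion at infinity. -/
def gaussianTailPrimitive (b : ℂ) (y : ℝ) : ℂ :=
  cexp (-b * y ^ 2) * (1 / (4 * b ^ 2 * y ^ 3) - 1 / (2 * b * y))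

lemma hasDerivAt_gaussianTailPrimitive {b : ℂ} (hb : b ≠ 0) {y : ℝ} (hy : y ≠ 0) :
    HasDerivAt (gaussianTailPrimitive b)
      (cexp (-b * y ^ 2) - cexp (-b * y ^ 2) * (3 / (4 * b ^ 2 * y ^ 4))) y := by
  have hy' : (y : ℂ) ≠ 0 := ofReal_ne_zero.2 hy
  have hid : HasDerivAt (fun t : ℝ => (t : ℂ)) 1 y := ofRealCLM.hasDerivAt
  have hcube : HasDerivAt (fun t : ℝ => 1 / (4 * b ^ 2 * (t : ℂ) ^ 3))
      (-(3 / (4 * b ^ 2 * y ^ 4))) y :=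
    ((hasDerivAt_const y (1 : ℂ)).fun_div ((hid.fun_pow 3).const_mul (4 * b ^ 2))
      (by simp [hb, hy])).congr_deriv (by push_cast; field_simp; ring)
  have hinv : HasDerivAt (fun t : ℝ => 1 / (2 * b * (t : ℂ))) (-(1 / (2 * b * y ^ 2))) y :=
    ((hasDerivAt_const y (1 : ℂ)).fun_div (hid.const_mul (2 * b))
      (by simp [hb, hy])).congr_deriv (by field_simp; ring)
  exact ((hasDerivAt_cexp_neg_mul_sq b y).fun_mul (hcube.fun_sub hinv)).congr_deriv
    (by field_simp; ring)

lemma tendsto_gaussianTailPrimitive_atTop {b : ℂ} (hb : 0 ≤ b.re) :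
    Tendsto (gaussianTailPrimitive b) atTop (𝓝 0) := by
  have hid : Tendsto (fun y : ℝ => ((y⁻¹ : ℝ) : ℂ)) atTop (𝓝 0) := by
    exact_mod_cast (continuous_ofReal.tendsto 0).comp tendsto_inv_atTop_zero
  have hfactor : Tendsto (fun y : ℝ => 1 / (4 * b ^ 2 * (y : ℂ) ^ 3) - 1 / (2 * b * y))
      atTop (𝓝 0) := by
    have h := ((hid.pow 3).const_mul (1 / (4 * b ^ 2))).sub (hid.const_mul (1 / (2 * b)))
    simp only [ne_eq, OfNat.ofNat_ne_zero, not_false_eq_true, zero_pow, mul_zero, sub_zero] at h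
    refine h.congr fun y => ?_
    push_cast
    ring
  refine squeeze_zero_norm (fun y => ?_) (tendsto_zero_iff_norm_tendsto_zero.1 hfactor)
  rw [gaussianTailPrimitive, norm_mul]
  exact mul_le_of_le_one_left (norm_nonneg _) (norm_cexp_neg_mul_sq_le_one hb y)

lemma integrableOn_Ioi_and_norm_integral_le_of_norm_le_div_pow_four {E : Type*}
    [NormedAddCommGroup E] [NormedSpace ℝ E] {r : ℝ → E} {a M : ℝ} (ha : 0 < a)
    (hr : AEStronglyMeasurable r (volume.restrict (Ioi a)))
    (hle : ∀ y ∈ Ioi a, ‖r y‖ ≤ M / y ^ 4) :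
    IntegrableOn r (Ioi a) ∧ ‖∫ y in Ioi a, r y‖ ≤ M / (3 * a ^ 3) := by
  have hle' : ∀ᵐ y ∂volume.restrict (Ioi a), ‖r y‖ ≤ M * y ^ (-4 : ℝ) := by
    refine (ae_restrict_iff' measurableSet_Ioi).2 (.of_forall fun y hy => ?_)
    rw [Real.rpow_neg (ha.trans hy).le, ← div_eq_mul_inv]
    exact_mod_cast hle y hy
  have hpow : IntegrableOn (fun y : ℝ => M * y ^ (-4 : ℝ)) (Ioi a) :=
    (integrableOn_Ioi_rpow_of_lt (by norm_num) ha).const_mul _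
  refine ⟨hpow.mono' hr hle', (norm_integral_le_of_norm_le hpow hle').trans_eq ?_⟩
  rw [integral_const_mul, integral_Ioi_rpow_of_lt (by norm_num) ha,
    show (-4 + 1 : ℝ) = -(3 : ℕ) by norm_num, Real.rpow_neg ha.le, Real.rpow_natCast]
  field_simp
  norm_num

lemma norm_integral_Ioi_cexp_neg_mul_sq_sub_le {b : ℂ} (hb : 0 < b.re) {a : ℝ} (ha : 0 < a) :
    ‖(∫ y : ℝ in Ioi a, cexp (-b * y ^ 2)) - cexp (-b * a ^ 2) / (2 * b * a)‖ ≤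
      1 / (2 * ‖b‖ ^ 2 * a ^ 3) := by
  have hb0 : b ≠ 0 := by rintro rfl; simp at hb
  set r : ℝ → ℂ := fun y => cexp (-b * y ^ 2) * (3 / (4 * b ^ 2 * y ^ 4))
  have hr_le : ∀ y ∈ Ioi a, ‖r y‖ ≤ 3 / (4 * ‖b‖ ^ 2) / y ^ 4 := fun y _ => by
    refine (norm_mul_le_of_le (norm_cexp_neg_mul_sq_le_one hb.le y) le_rfl).trans_eq ?_
    simp only [norm_div, norm_mul, norm_pow, norm_real, norm_ofNat, Real.norm_eq_abs,
      Even.pow_abs (by decide : Even 4), one_mul, div_div]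
  obtain ⟨hr, hr_int⟩ := integrableOn_Ioi_and_norm_integral_le_of_norm_le_div_pow_four ha
    (by fun_prop : Measurable r).aestronglyMeasurable hr_le
  have hexp : IntegrableOn (fun y : ℝ => cexp (-b * y ^ 2)) (Ioi a) :=
    (integrable_cexp_neg_mul_sq hb).integrableOn
  have hparts : ∫ y in Ioi a, (cexp (-b * y ^ 2) - r y) = 0 - gaussianTailPrimitive b a :=
    integral_Ioi_of_hasDerivAt_of_tendsto'
      (fun y hy => hasDerivAt_gaussianTailPrimitive hb0 (ha.trans_le hy).ne') (hexp.sub hr)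
      (tendsto_gaussianTailPrimitive_atTop hb.le)
  have hboundary : ‖cexp (-b * a ^ 2) / (4 * b ^ 2 * a ^ 3)‖ ≤ 1 / (4 * ‖b‖ ^ 2 * a ^ 3) := by
    simp only [norm_div, norm_mul, norm_pow, norm_real, norm_ofNat, Real.norm_of_nonneg ha.le]
    gcongr
    exact norm_cexp_neg_mul_sq_le_one hb.le a
  rw [integral_sub hexp hr, gaussianTailPrimitive] at hparts
  calc ‖(∫ y : ℝ in Ioi a, cexp (-b * y ^ 2)) - cexp (-b * a ^ 2) / (2 * b * a)‖
      = ‖(∫ y in Ioi a, r y) - cexp (-b * a ^ 2) / (4 * b ^ 2 * a ^ 3)‖ := by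
        rw [sub_eq_iff_eq_add.1 hparts]
        ring_nf
    _ ≤ 3 / (4 * ‖b‖ ^ 2) / (3 * a ^ 3) + 1 / (4 * ‖b‖ ^ 2 * a ^ 3) :=
        (norm_sub_le _ _).trans (add_le_add hr_int hboundary)
    _ = 1 / (2 * ‖b‖ ^ 2 * a ^ 3) := by field_simp; norm_num

lemma norm_integral_cexp_neg_mul_sq_sub_le_of_re_pos {b : ℂ} (hb : 0 < b.re) {a : ℝ}
    (ha : 0 < a) :
    ‖(∫ y in (0 : ℝ)..a, cexp (-b * y ^ 2)) -
        ((Real.pi / b) ^ (1 / 2 : ℂ) / 2 - cexp (-b * a ^ 2) / (2 * b * a))‖ ≤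
      1 / (2 * ‖b‖ ^ 2 * a ^ 3) := by
  have hexp := integrable_cexp_neg_mul_sq hb
  have hsplit := intervalIntegral.integral_interval_add_Ioi
    (hexp.integrableOn (s := Ioi 0)) (hexp.integrableOn (s := Ioi a))
  rw [integral_gaussian_complex_Ioi hb] at hsplit
  rw [← hsplit, norm_sub_rev, sub_right_comm, add_sub_cancel_left]
  exact norm_integral_Ioi_cexp_neg_mul_sq_sub_le hb ha

lemma ofReal_div_mem_slitPlane {r : ℝ} (hr : 0 < r) {b : ℂ} (hb : 0 ≤ b.re) (hb0 : b ≠ 0) :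
    (r / b : ℂ) ∈ slitPlane := by
  have hnormSq : 0 < normSq b := normSq_pos.2 hb0
  rw [mem_slitPlane_iff, div_re, div_im]
  rcases hb.lt_or_eq with hre | hre
  · left
    simp only [ofReal_re, ofReal_im, zero_mul, zero_div, add_zero]
    positivity
  · right
    have him : b.im ≠ 0 := fun him => hb0 (Complex.ext hre.symm him)
    simp [him, hr.ne', hb0]

lemma norm_integral_cexp_neg_mul_sq_sub_le {b : ℂ} (hb : 0 ≤ b.re) (hb0 : b ≠ 0) {a : ℝ}
    (ha : 0 < a) :
    ‖(∫ y in (0 : ℝ)..a, cexp (-b * y ^ 2)) -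
        ((Real.pi / b) ^ (1 / 2 : ℂ) / 2 - cexp (-b * a ^ 2) / (2 * b * a))‖ ≤
      1 / (2 * ‖b‖ ^ 2 * a ^ 3) := by
  have hmem : b ∈ closure {c : ℂ | 0 < c.re} := by
    rwa [closure_setOfPred_lt_re]
  have hintegral : Continuous fun c : ℂ => ∫ y in (0 : ℝ)..a, cexp (-c * y ^ 2) :=
    intervalIntegral.continuous_parametric_intervalIntegral_of_continuous' (by fun_prop) _ _
  have hsqrt : ContinuousAt (fun c : ℂ => (Real.pi / c) ^ (1 / 2 : ℂ)) b :=
    (continuousAt_const.div continuousAt_id hb0).cpow continuousAt_const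
      (ofReal_div_mem_slitPlane Real.pi_pos hb hb0)
  have hboundary : ContinuousAt (fun c : ℂ => cexp (-c * a ^ 2) / (2 * c * a)) b :=
    ContinuousAt.div (by fun_prop) (by fun_prop) (by simp [hb0, ha.ne'])
  have herror : ContinuousAt (fun c : ℂ => 1 / (2 * ‖c‖ ^ 2 * a ^ 3)) b :=
    ContinuousAt.div (by fun_prop) (by fun_prop) (by simp [hb0, ha.ne'])
  exact ContinuousWithinAt.closure_le hmem
    (hintegral.continuousAt.sub ((hsqrt.div_const 2).sub hboundary)).norm.continuousWithinAt
    herror.continuousWithinAt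
    fun c hc => norm_integral_cexp_neg_mul_sq_sub_le_of_re_pos hc ha

lemma norm_integral_cexp_neg_mul_sq_le {b : ℂ} (hb : 0 ≤ b.re) (hb0 : b ≠ 0) {a : ℝ}
    (ha : 0 ≤ a) :
    ‖∫ y in (0 : ℝ)..a, cexp (-b * y ^ 2)‖ ≤ 2 / √‖b‖ := by
  set s := √‖b‖
  have hs : 0 < s := Real.sqrt_pos.2 (norm_pos_iff.2 hb0)
  have hnorm : ‖b‖ = s ^ 2 := (Real.sq_sqrt (norm_nonneg b)).symm
  rcases le_total a (1 / s) with has | has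
  · calc ‖∫ y in (0 : ℝ)..a, cexp (-b * y ^ 2)‖ ≤ 1 * |a - 0| :=
          intervalIntegral.norm_integral_le_of_norm_le_const
            fun y _ => norm_cexp_neg_mul_sq_le_one hb y
      _ ≤ 1 / s := by rwa [one_mul, sub_zero, abs_of_nonneg ha]
      _ ≤ 2 / s := by gcongr; norm_num
  · have ha0 : 0 < a := (one_div_pos.2 hs).trans_le has
    have hsa : 1 ≤ s * a := by rwa [div_le_iff₀' hs] at has
    have hsqrt : ‖(Real.pi / b) ^ (1 / 2 : ℂ) / 2‖ ≤ 1 / s := by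
      rw [norm_div, norm_ofNat, show (1 / 2 : ℂ) = ((1 / 2 : ℝ) : ℂ) by norm_num, norm_cpow_real,
        ← Real.sqrt_eq_rpow, norm_div, norm_real, Real.norm_of_nonneg Real.pi_pos.le, hnorm,
        Real.sqrt_div Real.pi_pos.le, Real.sqrt_sq hs.le, div_right_comm]
      gcongr
      rw [div_le_one two_pos, Real.sqrt_le_iff]
      exact ⟨zero_le_two, Real.pi_le_four.trans_eq (by norm_num)⟩
    have hboundary : ‖cexp (-b * a ^ 2) / (2 * b * a)‖ ≤ 1 / (2 * s) := by
      rw [norm_div]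
      refine div_le_div₀ zero_le_one (norm_cexp_neg_mul_sq_le_one hb a) (by positivity) ?_
      rw [norm_mul, norm_mul, norm_ofNat, hnorm, norm_real, Real.norm_of_nonneg ha]
      nlinarith
    have herror : 1 / (2 * ‖b‖ ^ 2 * a ^ 3) ≤ 1 / (2 * s) := by
      rw [hnorm, show 2 * (s ^ 2) ^ 2 * a ^ 3 = 2 * s * (s * a) ^ 3 by ring]
      exact one_div_le_one_div_of_le (by positivity)
        (le_mul_of_one_le_right (by positivity) (one_le_pow₀ hsa))
    have h := (norm_integral_cexp_neg_mul_sq_sub_le hb hb0 ha0).trans herror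
    calc ‖∫ y in (0 : ℝ)..a, cexp (-b * y ^ 2)‖
        ≤ ‖(Real.pi / b) ^ (1 / 2 : ℂ) / 2 - cexp (-b * a ^ 2) / (2 * b * a)‖ + 1 / (2 * s) :=
          norm_le_norm_add_const_of_dist_le (by rwa [dist_eq_norm])
      _ ≤ 1 / s + 1 / (2 * s) + 1 / (2 * s) := by
          gcongr
          exact norm_sub_le_of_le hsqrt hboundary
      _ = 2 / s := by field_simp; norm_num

lemma norm_integral_cexp_neg_mul_sq_mul_le {χ χ' : ℝ → ℂ} {a : ℝ} (ha : 0 ≤ a)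
    (hχ : ∀ y ∈ Icc 0 a, HasDerivAt χ (χ' y) y) (hχ' : ContinuousOn χ' (Icc 0 a))
    {b : ℂ} (hb : 0 ≤ b.re) (hb0 : b ≠ 0) :
    ‖∫ y in (0 : ℝ)..a, cexp (-b * y ^ 2) * χ y‖ ≤
      2 / √‖b‖ * (‖χ a‖ + ∫ y in (0 : ℝ)..a, ‖χ' y‖) := by
  set G : ℝ → ℂ := fun y => ∫ t in (0 : ℝ)..y, cexp (-b * t ^ 2)
  have hcont : Continuous fun t : ℝ => cexp (-b * t ^ 2) := by fun_prop
  have hG_le : ∀ y, 0 ≤ y → ‖G y‖ ≤ 2 / √‖b‖ := fun y =>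
    norm_integral_cexp_neg_mul_sq_le hb hb0
  rw [← uIcc_of_le ha] at hχ hχ'
  have hparts : ∫ y in (0 : ℝ)..a, cexp (-b * y ^ 2) * χ y =
      χ a * G a - ∫ y in (0 : ℝ)..a, χ' y * G y := by
    have h := intervalIntegral.integral_mul_deriv_eq_deriv_mul hχ
      (fun y _ => (hcont.integral_hasStrictDerivAt 0 y).hasDerivAt) hχ'.intervalIntegrable
      (hcont.intervalIntegrable 0 a)
    simpa only [G, intervalIntegral.integral_same, mul_zero, sub_zero, mul_comm (cexp _)] using h
  have hremainder : ‖∫ y in (0 : ℝ)..a, χ' y * G y‖ ≤ 2 / √‖b‖ * ∫ y in (0 : ℝ)..a, ‖χ' y‖ := by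
    rw [← intervalIntegral.integral_const_mul]
    refine intervalIntegral.norm_integral_le_of_norm_le ha (.of_forall fun y hy => ?_)
      (hχ'.norm.intervalIntegrable.const_mul _)
    rw [norm_mul, mul_comm]
    gcongr
    exact hG_le y hy.1.le
  rw [hparts, mul_add]
  refine norm_sub_le_of_le ?_ hremainder
  rw [norm_mul, mul_comm]
  gcongr
  exact hG_le a ha

lemma integral_cexp_neg_mul_sq_mul_id_mul {u u' : ℝ → ℂ} {a : ℝ}
    (hu : ∀ y ∈ uIcc 0 a, HasDerivAt u (u' y) y) (hu' : ContinuousOn u' (uIcc 0 a))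
    {b : ℂ} (hb0 : b ≠ 0) :
    ∫ y in (0 : ℝ)..a, cexp (-b * y ^ 2) * (y * u y) =
      ((∫ y in (0 : ℝ)..a, cexp (-b * y ^ 2) * u' y) - (u a * cexp (-b * a ^ 2) - u 0)) /
        (2 * b) := by
  have hprim : ∀ y ∈ uIcc 0 a, HasDerivAt (fun y : ℝ => -cexp (-b * y ^ 2) / (2 * b))
      (y * cexp (-b * y ^ 2)) y := fun y _ =>
    ((hasDerivAt_cexp_neg_mul_sq b y).fun_neg.div_const (2 * b)).congr_deriv (by field_simp)
  have h := intervalIntegral.integral_mul_deriv_eq_deriv_mul hu hprim hu'.intervalIntegrable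
    (Continuous.intervalIntegrable (by fun_prop) 0 a)
  have hremainder : ∫ y in (0 : ℝ)..a, u' y * (-cexp (-b * y ^ 2) / (2 * b)) =
      -(∫ y in (0 : ℝ)..a, cexp (-b * y ^ 2) * u' y) / (2 * b) := by
    rw [← intervalIntegral.integral_neg, ← intervalIntegral.integral_div]
    exact intervalIntegral.integral_congr fun y _ => by ring
  calc ∫ y in (0 : ℝ)..a, cexp (-b * y ^ 2) * (y * u y)
      = ∫ y in (0 : ℝ)..a, u y * (y * cexp (-b * y ^ 2)) :=
        intervalIntegral.integral_congr fun y _ => by ring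
    _ = _ := by
        rw [h, hremainder]
        simp only [ofReal_zero, ne_eq, OfNat.ofNat_ne_zero, not_false_eq_true, zero_pow, mul_zero,
          Complex.exp_zero]
        ring

lemma integral_cexp_neg_mul_sq_mul_const_add_id_mul {u u' : ℝ → ℂ} {a : ℝ}
    (hu : ∀ y ∈ uIcc 0 a, HasDerivAt u (u' y) y) (hu' : ContinuousOn u' (uIcc 0 a))
    (c : ℂ) {b : ℂ} (hb0 : b ≠ 0) :
    ∫ y in (0 : ℝ)..a, cexp (-b * y ^ 2) * (c + y * u y) =
      c * (∫ y in (0 : ℝ)..a, cexp (-b * y ^ 2)) +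
        ((∫ y in (0 : ℝ)..a, cexp (-b * y ^ 2) * u' y) - (u a * cexp (-b * a ^ 2) - u 0)) /
          (2 * b) := by
  have hu_cont : ContinuousOn u (uIcc 0 a) := fun y hy =>
    (hu y hy).continuousAt.continuousWithinAt
  rw [← integral_cexp_neg_mul_sq_mul_id_mul hu hu' hb0, ← intervalIntegral.integral_const_mul,
    ← intervalIntegral.integral_add (Continuous.intervalIntegrable (by fun_prop) _ _)
      (ContinuousOn.intervalIntegrable (by fun_prop))]
  exact intervalIntegral.integral_congr fun y _ => by ring

end GaussianIntegral

section EndpointExpansion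

open Set Complex

lemma analyticAt_dslope {𝕜 E : Type*} [NontriviallyNormedField 𝕜] [NormedAddCommGroup E]
    [NormedSpace 𝕜 E] {f : 𝕜 → E} {c z : 𝕜} (hc : AnalyticAt 𝕜 f c) (hz : AnalyticAt 𝕜 f z) :
    AnalyticAt 𝕜 (dslope f c) z := by
  rcases eq_or_ne z c with rfl | hne
  · obtain ⟨p, hp⟩ := hz
    exact hp.has_fpower_series_dslope_fslope.analyticAt
  · refine AnalyticAt.congr ?_ (dslope_eventuallyEq_slope_of_ne f hne).symm
    exact ((analyticAt_id.sub analyticAt_const).inv (sub_ne_zero.2 hne)).smul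
      (hz.sub analyticAt_const)

lemma rpow_neg_three_div_two {r : ℝ} (hr : 0 ≤ r) :
    r ^ (-(3 : ℝ) / 2) = 1 / (r * √r) := by
  rw [neg_div, Real.rpow_neg hr, Real.sqrt_eq_rpow, ← Real.rpow_one_add' hr (by norm_num)]
  norm_num

lemma norm_integral_cexp_neg_mul_sq_mul_const_add_id_mul_sub_le {u u' u'' : ℝ → ℂ} {a : ℝ}
    (ha : 0 < a) (hu : ∀ y ∈ Icc 0 a, HasDerivAt u (u' y) y)
    (hu' : ∀ y ∈ Icc 0 a, HasDerivAt u' (u'' y) y) (hu'' : ContinuousOn u'' (Icc 0 a))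
    (c : ℂ) {b : ℂ} (hb : 0 ≤ b.re) (hb1 : 1 ≤ ‖b‖) :
    ‖(∫ y in (0 : ℝ)..a, cexp (-b * y ^ 2) * (c + y * u y)) -
        (c * ((Real.pi / b) ^ (1 / 2 : ℂ) / 2) -
          ((c + a * u a) * cexp (-b * a ^ 2) / a - u 0) / (2 * b))‖ ≤
      (‖c‖ / (2 * a ^ 3) + (‖u' a‖ + ∫ y in (0 : ℝ)..a, ‖u'' y‖)) * ‖b‖ ^ (-(3 : ℝ) / 2) := by
  have hβ : 0 < ‖b‖ := one_pos.trans_le hb1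
  have hb0 : b ≠ 0 := norm_pos_iff.1 hβ
  have ha0 : (a : ℂ) ≠ 0 := ofReal_ne_zero.2 ha.ne'
  have hu'_cont : ContinuousOn u' (Icc 0 a) := fun y hy =>
    (hu' y hy).continuousAt.continuousWithinAt
  have hsplit := integral_cexp_neg_mul_sq_mul_const_add_id_mul (u := u) (by rwa [uIcc_of_le ha.le])
    (by rwa [uIcc_of_le ha.le]) c hb0
  set g := ∫ y in (0 : ℝ)..a, cexp (-b * y ^ 2)
  set R := ∫ y in (0 : ℝ)..a, cexp (-b * y ^ 2) * u' y
  have hg := norm_integral_cexp_neg_mul_sq_sub_le hb hb0 ha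
  have hR := norm_integral_cexp_neg_mul_sq_mul_le ha.le hu' hu'' hb hb0
  set K := ‖u' a‖ + ∫ y in (0 : ℝ)..a, ‖u'' y‖
  set P := (Real.pi / b) ^ (1 / 2 : ℂ) / 2
  have hsqrt_le : √‖b‖ ≤ ‖b‖ := Real.sqrt_le_iff.2 ⟨hβ.le, le_self_pow₀ hb1 two_ne_zero⟩
  calc ‖(∫ y in (0 : ℝ)..a, cexp (-b * y ^ 2) * (c + y * u y)) -
          (c * P - ((c + a * u a) * cexp (-b * a ^ 2) / a - u 0) / (2 * b))‖
      = ‖c * (g - (P - cexp (-b * a ^ 2) / (2 * b * a))) + R / (2 * b)‖ := by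
        rw [hsplit]
        congr 1
        field_simp
        ring
    _ ≤ ‖c‖ * (1 / (2 * ‖b‖ ^ 2 * a ^ 3)) + 2 / √‖b‖ * K / (2 * ‖b‖) := by
        refine norm_add_le_of_le (norm_mul_le_of_le le_rfl hg) ?_
        rw [norm_div, norm_mul, norm_ofNat]
        gcongr
    _ = ‖c‖ / (2 * a ^ 3) * (1 / (‖b‖ * ‖b‖)) + K * (1 / (‖b‖ * √‖b‖)) := by
        field_simp
    _ ≤ ‖c‖ / (2 * a ^ 3) * (1 / (‖b‖ * √‖b‖)) + K * (1 / (‖b‖ * √‖b‖)) := by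
        gcongr
    _ = (‖c‖ / (2 * a ^ 3) + K) * ‖b‖ ^ (-(3 : ℝ) / 2) := by
        rw [rpow_neg_three_div_two hβ.le]
        ring

theorem exists_norm_integral_cexp_neg_mul_sq_mul_sub_le {φ : ℝ → ℂ} {a : ℝ} (ha : 0 < a)
    (hφ : AnalyticOnNhd ℝ φ (Icc 0 a)) :
    ∃ C : ℝ, ∀ b : ℂ, 0 ≤ b.re → 1 ≤ ‖b‖ →
      ‖(∫ y in (0 : ℝ)..a, cexp (-b * y ^ 2) * φ y) -
          (φ 0 * ((Real.pi / b) ^ (1 / 2 : ℂ) / 2) -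
            (φ a * cexp (-b * a ^ 2) / a - deriv φ 0) / (2 * b))‖ ≤
        C * ‖b‖ ^ (-(3 : ℝ) / 2) := by
  set u := dslope φ 0
  have hu : AnalyticOnNhd ℝ u (Icc 0 a) := fun y hy =>
    analyticAt_dslope (hφ 0 (left_mem_Icc.2 ha.le)) (hφ y hy)
  have hφu : ∀ y : ℝ, φ y = φ 0 + y * u y := fun y => by
    have := sub_smul_dslope φ 0 y
    rw [sub_zero, real_smul] at this
    rw [this, add_sub_cancel]
  refine ⟨‖φ 0‖ / (2 * a ^ 3) + (‖deriv u a‖ + ∫ y in (0 : ℝ)..a, ‖deriv (deriv u) y‖),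
    fun b hb hb1 => ?_⟩
  have h := norm_integral_cexp_neg_mul_sq_mul_const_add_id_mul_sub_le ha
    (fun y hy => (hu y hy).differentiableAt.hasDerivAt)
    (fun y hy => (hu.deriv y hy).differentiableAt.hasDerivAt) hu.deriv.deriv.continuousOn
    (φ 0) hb hb1
  simpa only [← hφu, u, dslope_same] using h

end EndpointExpansion

section BesselIntegral

open Set Complex

lemma integral_sub_add_eq_integral_add_reflect {E : Type*} [NormedAddCommGroup E]
    [NormedSpace ℝ E] {f : ℝ → E} {m r : ℝ}
    (hf : IntervalIntegrable f volume (m - r) (m + r)) :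
    ∫ s in (m - r)..(m + r), f s = ∫ t in (0 : ℝ)..r, (f (m + t) + f (m - t)) := by
  have hm : m ∈ uIcc (m - r) (m + r) := by
    rw [mem_uIcc]
    rcases le_total 0 r with hr | hr
    · exact Or.inl ⟨by linarith, by linarith⟩
    · exact Or.inr ⟨by linarith, by linarith⟩
  have hleft : IntervalIntegrable f volume (m - r) m :=
    hf.mono_set (uIcc_subset_uIcc left_mem_uIcc hm)
  have hright : IntervalIntegrable f volume m (m + r) :=
    hf.mono_set (uIcc_subset_uIcc hm right_mem_uIcc)
  have hadd : IntervalIntegrable (fun t => f (m + t)) volume 0 r := by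
    simpa using hright.comp_add_left m
  have hsub : IntervalIntegrable (fun t => f (m - t)) volume 0 r := by
    simpa using (hleft.comp_sub_left m).symm
  rw [intervalIntegral.integral_add hadd hsub, intervalIntegral.integral_comp_add_left,
    intervalIntegral.integral_comp_sub_left, add_zero, sub_zero, add_comm (∫ _ in _.._, _),
    intervalIntegral.integral_add_adjacent_intervals hleft hright]

lemma besselJ_eq_integral_cos (n : ℤ) (x : ℝ) :
    besselJ n x =
      ((1 / Real.pi * ∫ τ in (0 : ℝ)..Real.pi, Real.cos (x * Real.sin τ - n * τ) : ℝ) : ℂ) := by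
  have hfold : ∫ τ in (-Real.pi)..Real.pi, cexp (I * ((x * Real.sin τ : ℝ) - (n * τ : ℝ))) =
      ((∫ τ in (0 : ℝ)..Real.pi, 2 * Real.cos (x * Real.sin τ - n * τ) : ℝ) : ℂ) := by
    have h := integral_sub_add_eq_integral_add_reflect (m := 0) (r := Real.pi)
      (f := fun τ => cexp (I * ((x * Real.sin τ : ℝ) - (n * τ : ℝ))))
      (Continuous.intervalIntegrable (by fun_prop) _ _)
    simp only [zero_sub, zero_add] at h
    rw [h, ← intervalIntegral.integral_ofReal]
    refine intervalIntegral.integral_congr fun τ _ => ?_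
    simp only [ofReal_mul, ofReal_ofNat, ofReal_cos, two_cos, Real.sin_neg]
    congr 2 <;> push_cast <;> ring
  rw [besselJ, hfold, intervalIntegral.integral_const_mul]
  push_cast
  field_simp

lemma integral_cos_mul_sin_sub (ν x : ℝ) :
    ∫ τ in (0 : ℝ)..Real.pi, Real.cos (x * Real.sin τ - ν * τ) =
      2 * ∫ t in (0 : ℝ)..(Real.pi / 2),
        Real.cos (x * Real.cos t - ν * Real.pi / 2) * Real.cos (ν * t) := by
  have hfold := integral_sub_add_eq_integral_add_reflect (m := Real.pi / 2)
    (r := Real.pi / 2) (f := fun τ => Real.cos (x * Real.sin τ - ν * τ))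
    (Continuous.intervalIntegrable (by fun_prop) _ _)
  rw [sub_self, add_halves] at hfold
  rw [hfold, ← intervalIntegral.integral_const_mul]
  refine intervalIntegral.integral_congr fun t _ => ?_
  simp only [add_comm (Real.pi / 2) t, Real.sin_add_pi_div_two, Real.sin_pi_div_two_sub]
  rw [Real.cos_add_cos, ← Real.cos_neg (ν * t), mul_assoc]
  congr 3 <;> ring

lemma besselJ_eq_re_integral_cexp (n : ℤ) (x : ℝ) :
    besselJ n x =
      ((2 / Real.pi * (cexp (-(n * Real.pi / 2) * I) *
        ∫ t in (0 : ℝ)..(Real.pi / 2),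
          cexp (x * Real.cos t * I) * Real.cos (n * t)).re : ℝ) : ℂ) := by
  have hre : (cexp (-(n * Real.pi / 2) * I) *
      ∫ t in (0 : ℝ)..(Real.pi / 2), cexp (x * Real.cos t * I) * Real.cos (n * t)).re =
        ∫ t in (0 : ℝ)..(Real.pi / 2),
          Real.cos (x * Real.cos t - n * Real.pi / 2) * Real.cos (n * t) := by
    rw [← intervalIntegral.integral_const_mul]
    refine (reCLM.intervalIntegral_comp_comm
      (Continuous.intervalIntegrable (by fun_prop) _ _)).symm.trans ?_
    refine intervalIntegral.integral_congr fun t _ => ?_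
    have hexp : cexp (-(n * Real.pi / 2) * I) * cexp (x * Real.cos t * I) =
        cexp ((x * Real.cos t - n * Real.pi / 2 : ℝ) * I) := by
      rw [← Complex.exp_add]
      push_cast
      ring_nf
    simp only [reCLM_apply]
    rw [← mul_assoc, hexp, re_mul_ofReal, exp_ofReal_mul_I_re]
  rw [besselJ_eq_integral_cos, integral_cos_mul_sin_sub, hre]
  congr 1
  ring

/-- The amplitude of the Bessel integral after the substitution `y = sin (t / 2)`, which turns
`cos t` into `1 - 2 y²`, `cos (n t)` into the Chebyshev polynomial `T_n (1 - 2 y²)` and `dt` into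
`2 dy / √(1 - y²)`. -/
def besselAmplitude (n : ℤ) (y : ℝ) : ℝ :=
  2 * (Polynomial.Chebyshev.T ℝ n).eval (1 - 2 * y ^ 2) / √(1 - y ^ 2)

lemma analyticAt_besselAmplitude (n : ℤ) {y : ℝ} (hy : y ^ 2 < 1) :
    AnalyticAt ℝ (besselAmplitude n) y := by
  have hpos : 0 < 1 - y ^ 2 := sub_pos.2 hy
  have hsqrt : AnalyticAt ℝ (fun t : ℝ => √(1 - t ^ 2)) y :=
    ((Real.contDiffAt_sqrt hpos.ne').analyticAt).comp (f := fun t : ℝ => 1 - t ^ 2) (by fun_prop)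
  have hpoly : AnalyticAt ℝ (fun t : ℝ => (Polynomial.Chebyshev.T ℝ n).eval (1 - 2 * t ^ 2)) y :=
    (by fun_prop : AnalyticAt ℝ (fun t : ℝ => 1 - 2 * t ^ 2) y).aeval_polynomial _
  exact (analyticAt_const.mul hpoly).div hsqrt (Real.sqrt_pos.2 hpos).ne'

lemma sqrt_two_div_two_sq : (√2 / 2) ^ 2 = 1 / 2 := by
  norm_num [div_pow]

lemma analyticOnNhd_ofReal_besselAmplitude (n : ℤ) :
    AnalyticOnNhd ℝ (fun y => (besselAmplitude n y : ℂ)) (Icc 0 (√2 / 2)) := fun y hy => by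
  have hy_sq : y ^ 2 < 1 := by
    linarith [pow_le_pow_left₀ hy.1 hy.2 2, sqrt_two_div_two_sq]
  exact (ofRealCLM.analyticAt _).comp (analyticAt_besselAmplitude n hy_sq)

lemma besselAmplitude_zero (n : ℤ) : besselAmplitude n 0 = 2 := by
  simp [besselAmplitude]

lemma besselAmplitude_sqrt_two_div_two (n : ℤ) :
    besselAmplitude n (√2 / 2) = 2 * √2 * Real.cos (n * Real.pi / 2) := by
  have hT : (Polynomial.Chebyshev.T ℝ n).eval 0 = Real.cos (n * Real.pi / 2) := by
    rw [← Real.cos_pi_div_two, Polynomial.Chebyshev.T_real_cos, mul_div_assoc]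
  rw [besselAmplitude, sqrt_two_div_two_sq, show (1 - 2 * (1 / 2) : ℝ) = 0 by norm_num, hT,
    show (1 - 1 / 2 : ℝ) = 2⁻¹ by norm_num, Real.sqrt_inv, div_inv_eq_mul]
  ring

lemma deriv_besselAmplitude_zero (n : ℤ) : deriv (besselAmplitude n) 0 = 0 := by
  have heven : (fun y => besselAmplitude n (-y)) = besselAmplitude n := by
    ext y
    simp only [besselAmplitude, neg_sq]
  have h := deriv_comp_neg (besselAmplitude n) 0
  rw [heven, neg_zero] at h
  linarith

lemma deriv_ofReal_besselAmplitude_zero (n : ℤ) :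
    deriv (fun y => (besselAmplitude n y : ℂ)) 0 = 0 := by
  have h := (analyticAt_besselAmplitude n (y := 0) (by norm_num)).differentiableAt.hasDerivAt
  rw [h.ofReal_comp.deriv, deriv_besselAmplitude_zero, ofReal_zero]

lemma cos_half_pos {t : ℝ} (ht : t ∈ Icc 0 (Real.pi / 2)) : 0 < Real.cos (t / 2) :=
  Real.cos_pos_of_mem_Ioo ⟨by linarith [ht.1, Real.pi_pos], by linarith [ht.2, Real.pi_pos]⟩

lemma one_sub_two_mul_sin_half_sq (t : ℝ) : 1 - 2 * Real.sin (t / 2) ^ 2 = Real.cos t := by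
  rw [← Real.cos_two_mul_eq_one_sub, mul_div_cancel₀ _ two_ne_zero]

lemma besselAmplitude_sin_half (n : ℤ) {t : ℝ} (ht : t ∈ Icc 0 (Real.pi / 2)) :
    Real.cos (t / 2) / 2 * besselAmplitude n (Real.sin (t / 2)) = Real.cos (n * t) := by
  have hcos := cos_half_pos ht
  rw [besselAmplitude, one_sub_two_mul_sin_half_sq, Polynomial.Chebyshev.T_real_cos, ← Real.cos_sq',
    Real.sqrt_sq hcos.le]
  field_simp

lemma integral_cexp_cos_mul_cos (n : ℤ) (x : ℝ) :
    ∫ t in (0 : ℝ)..(Real.pi / 2), cexp (x * Real.cos t * I) * Real.cos (n * t) =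
      cexp (x * I) *
        ∫ y in (0 : ℝ)..(√2 / 2), cexp (-(2 * x * I) * y ^ 2) * besselAmplitude n y := by
  set g : ℝ → ℂ := fun y => cexp (x * (1 - 2 * y ^ 2) * I) * besselAmplitude n y
  have hsin : ∀ t ∈ uIcc 0 (Real.pi / 2),
      HasDerivAt (fun t => Real.sin (t / 2)) (Real.cos (t / 2) / 2) t := fun t _ =>
    ((hasDerivAt_id t).div_const 2).sin.congr_deriv (mul_one_div _ _)
  have hg : ContinuousOn g ((fun t => Real.sin (t / 2)) '' uIcc 0 (Real.pi / 2)) := by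
    rintro _ ⟨t, ht, rfl⟩
    rw [uIcc_of_le Real.pi_div_two_pos.le] at ht
    have hcos : 0 < Real.cos (t / 2) := cos_half_pos ht
    have hlt : Real.sin (t / 2) ^ 2 < 1 := by
      nlinarith [Real.sin_sq_add_cos_sq (t / 2)]
    have := (analyticAt_besselAmplitude n hlt).continuousAt
    exact ContinuousAt.continuousWithinAt (by fun_prop)
  calc ∫ t in (0 : ℝ)..(Real.pi / 2), cexp (x * Real.cos t * I) * Real.cos (n * t)
      = ∫ t in (0 : ℝ)..(Real.pi / 2), (Real.cos (t / 2) / 2) • g (Real.sin (t / 2)) := by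
        refine intervalIntegral.integral_congr fun t ht => ?_
        rw [uIcc_of_le Real.pi_div_two_pos.le] at ht
        have hdouble : (1 - 2 * (Real.sin (t / 2) : ℂ) ^ 2) = Real.cos t := by
          exact_mod_cast one_sub_two_mul_sin_half_sq t
        simp only [g]
        rw [hdouble, ← besselAmplitude_sin_half n ht, real_smul]
        push_cast
        ring
    _ = ∫ y in (0 : ℝ)..(√2 / 2), g y := by
        have h := intervalIntegral.integral_deriv_smul_comp' hsin (by fun_prop) hg
        rwa [zero_div, Real.sin_zero, div_div, show (2 * 2 : ℝ) = 4 by norm_num,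
          Real.sin_pi_div_four] at h
    _ = _ := by
        rw [← intervalIntegral.integral_const_mul]
        refine intervalIntegral.integral_congr fun y _ => ?_
        simp only [g]
        rw [← mul_assoc, ← Complex.exp_add]
        ring_nf

lemma ofReal_div_I_cpow_half {r : ℝ} (hr : 0 < r) :
    (r / I : ℂ) ^ (1 / 2 : ℂ) = √r * cexp (-(Real.pi / 4) * I) := by
  rw [div_I, ← mul_neg, cpow_def_of_ne_zero (by simp [hr.ne']), log_ofReal_mul hr (by simp),
    log_neg_I, add_mul, Complex.exp_add, Real.sqrt_eq_rpow, Real.rpow_def_of_pos hr]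
  push_cast
  ring_nf

lemma exists_norm_integral_cexp_neg_mul_sq_mul_besselAmplitude_sub_le (n : ℤ) :
    ∃ C : ℝ, ∀ x : ℝ, 1 ≤ x →
      ‖(∫ y in (0 : ℝ)..(√2 / 2), cexp (-(2 * x * I) * y ^ 2) * besselAmplitude n y) -
          (√(Real.pi / (2 * x)) * cexp (-(Real.pi / 4) * I) +
            Real.cos (n * Real.pi / 2) / x * I * cexp (-(x * I)))‖ ≤
        C * x ^ (-(3 : ℝ) / 2) := by
  obtain ⟨C, hC⟩ := exists_norm_integral_cexp_neg_mul_sq_mul_sub_le (by positivity)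
    (analyticOnNhd_ofReal_besselAmplitude n)
  refine ⟨C * 2 ^ (-(3 : ℝ) / 2), fun x hx => ?_⟩
  have hx0 : 0 < x := one_pos.trans_le hx
  have hnorm : ‖2 * x * I‖ = 2 * x := by simp [abs_of_pos hx0]
  have hsqrt : (Real.pi / (2 * x * I)) ^ (1 / 2 : ℂ) =
      √(Real.pi / (2 * x)) * cexp (-(Real.pi / 4) * I) := by
    rw [← ofReal_div_I_cpow_half (by positivity)]
    push_cast
    rw [div_div]
  have hboundary : besselAmplitude n (√2 / 2) * cexp (-(2 * x * I) * (√2 / 2 : ℝ) ^ 2) /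
      (√2 / 2 : ℝ) = 4 * Real.cos (n * Real.pi / 2) * cexp (-(x * I)) := by
    have hexp : -(2 * x * I) * (√2 / 2 : ℝ) ^ 2 = -(x * I) := by
      rw [← ofReal_pow, sqrt_two_div_two_sq]
      push_cast
      ring
    rw [besselAmplitude_sqrt_two_div_two, hexp]
    push_cast
    field_simp
    ring
  have hinv : (2 * (2 * x * I))⁻¹ = -I / (4 * x) := by
    rw [mul_inv, mul_inv, inv_I]
    field_simp
    norm_num
  have h := hC (2 * x * I) (by simp) (by rw [hnorm]; linarith)
  rw [hsqrt, hboundary, deriv_ofReal_besselAmplitude_zero, besselAmplitude_zero, hnorm,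
    Real.mul_rpow zero_le_two hx0.le, ← mul_assoc C, sub_zero, div_eq_mul_inv _ (2 * (_ * I)),
    hinv] at h
  refine Eq.trans_le ?_ h
  congr 2
  push_cast
  ring

lemma exists_norm_integral_cexp_cos_mul_cos_sub_le (n : ℤ) :
    ∃ C : ℝ, ∀ x : ℝ, 1 ≤ x →
      ‖(∫ t in (0 : ℝ)..(Real.pi / 2), cexp (x * Real.cos t * I) * Real.cos (n * t)) -
          (√(Real.pi / (2 * x)) * cexp ((x - Real.pi / 4 : ℝ) * I) +
            Real.cos (n * Real.pi / 2) / x * I)‖ ≤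
        C * x ^ (-(3 : ℝ) / 2) := by
  obtain ⟨C, hC⟩ := exists_norm_integral_cexp_neg_mul_sq_mul_besselAmplitude_sub_le n
  refine ⟨C, fun x hx => Eq.trans_le ?_ (hC x hx)⟩
  have hphase : cexp ((x - Real.pi / 4 : ℝ) * I) = cexp (x * I) * cexp (-(Real.pi / 4) * I) := by
    rw [← Complex.exp_add]
    push_cast
    ring_nf
  have hcancel : cexp (x * I) * cexp (-(x * I)) = 1 := by
    rw [← Complex.exp_add, add_neg_cancel, Complex.exp_zero]
  rw [integral_cexp_cos_mul_cos, hphase, ← one_mul ‖_ - (_ + _ * cexp (-(x * I)))‖,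
    ← norm_exp_ofReal_mul_I x, ← norm_mul]
  congr 1
  linear_combination (Real.cos (n * Real.pi / 2) / x * I) * hcancel

lemma two_div_pi_mul_sqrt_pi_div (x : ℝ) :
    2 / Real.pi * √(Real.pi / (2 * x)) = √(2 / (Real.pi * x)) := by
  rw [← Real.sqrt_sq (show 0 ≤ 2 / Real.pi by positivity), ← Real.sqrt_mul (by positivity)]
  congr 1
  field_simp

lemma sin_mul_cos_int_mul_pi_div_two (n : ℤ) :
    Real.sin (n * Real.pi / 2) * Real.cos (n * Real.pi / 2) = 0 := by
  have h := Real.sin_two_mul (n * Real.pi / 2)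
  rw [mul_div_cancel₀ _ two_ne_zero, Real.sin_int_mul_pi] at h
  linarith

lemma two_div_pi_mul_re_cexp_mul (n : ℤ) (x : ℝ) :
    2 / Real.pi * (cexp (-(n * Real.pi / 2) * I) *
        (√(Real.pi / (2 * x)) * cexp ((x - Real.pi / 4 : ℝ) * I) +
          Real.cos (n * Real.pi / 2) / x * I)).re =
      √(2 / (Real.pi * x)) * Real.cos (x - n * Real.pi / 2 - Real.pi / 4) := by
  have hgaussian : (cexp (-(n * Real.pi / 2) * I) *
      (√(Real.pi / (2 * x)) * cexp ((x - Real.pi / 4 : ℝ) * I))).re =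
        √(Real.pi / (2 * x)) * Real.cos (x - n * Real.pi / 2 - Real.pi / 4) := by
    rw [mul_left_comm, ← Complex.exp_add, re_ofReal_mul, ← exp_ofReal_mul_I_re]
    congr 3
    push_cast
    ring
  have hboundary : (cexp (-(n * Real.pi / 2) * I) *
      (Real.cos (n * Real.pi / 2) / x * I)).re = 0 := by
    have hangle : (-(n * Real.pi / 2) : ℂ) = (-(n * Real.pi / 2) : ℝ) := by push_cast; rfl
    rw [hangle, ← mul_assoc, ← ofReal_div, mul_I_re, im_mul_ofReal, exp_ofReal_mul_I_im,
      Real.sin_neg, neg_mul, neg_neg, ← mul_div_assoc, sin_mul_cos_int_mul_pi_div_two, zero_div]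
  rw [mul_add, add_re, hgaussian, hboundary, add_zero, ← mul_assoc, two_div_pi_mul_sqrt_pi_div]

theorem besselJ_asymptotics_general (n : ℤ) :
    ∃ C x₀ : ℝ, ∀ x : ℝ, x₀ ≤ x →
      ‖besselJ n x -
          ((√(2 / (Real.pi * x)) * Real.cos (x - n * Real.pi / 2 - Real.pi / 4) : ℝ) : ℂ)‖ ≤
        C * x ^ (-(3 : ℝ) / 2) := by
  obtain ⟨C, hC⟩ := exists_norm_integral_cexp_cos_mul_cos_sub_le n
  refine ⟨2 / Real.pi * C, 1, fun x hx => ?_⟩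
  have hrotation : ‖cexp (-(n * Real.pi / 2) * I)‖ = 1 := by
    exact_mod_cast norm_exp_ofReal_mul_I (-(n * Real.pi / 2))
  rw [besselJ_eq_re_integral_cexp, ← two_div_pi_mul_re_cexp_mul, ← ofReal_sub, norm_real,
    ← mul_sub, ← sub_re, ← mul_sub, norm_mul, Real.norm_of_nonneg (by positivity), mul_assoc]
  gcongr
  refine (abs_re_le_norm _).trans ?_
  rw [norm_mul, hrotation, one_mul]
  exact hC x hx

end BesselIntegral

/-- The large-argument asymptotics of the Bessel function: for fixed `n ≥ 0`, as `x → +∞`,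
`J_n(x) = √(2/(πx)) cos(x − nπ/2 − π/4) + O(x^{−3/2})`. -/
theorem besselJ_asymptotics (n : ℕ) :
    ∃ C x₀ : ℝ, ∀ x : ℝ, x₀ ≤ x →
      ‖besselJ n x -
          ((Real.sqrt (2 / (Real.pi * x)) *
              Real.cos (x - n * Real.pi / 2 - Real.pi / 4) : ℝ) : ℂ)‖
        ≤ C * x ^ (-(3 : ℝ) / 2) := by
  exact_mod_cast besselJ_asymptotics_general n

end
end
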